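/- Let α > −1 and n ≥ 1, let ψ be analytic on 𝔻, not identically 0, and φ a nonconstant analytic self-map of 𝔻, and suppose D_{ψ,φ,n} is bounded on A_α². Then D_{ψ,φ,n} is J-symmetric if and only if ψ(z) = a z^n / (n! (1 − c z)^{n+α+2}) and φ(z) = c + b z/(1 − c z), where a = ψ^{(n)}(0) and b = φ′(0) are both nonzero complex numbers and c = φ(0) ∈ 𝔻. -/

import Mathlib

open Complex Metric Set

noncomputable section

/-- The open unit disk in `ℂ`. -/
def unitDisk : Set ℂ := Metric.ball 0 1

/-- `wb2 α j` is `β(j)² = j!·Γ(α+2)/Γ(j+α+2)`, the square of the norm of `z^j` in `A_α²`. -/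
def wb2 (α : ℝ) (j : ℕ) : ℝ :=
  (j.factorial : ℝ) * Real.Gamma (α + 2) / Real.Gamma ((j : ℝ) + α + 2)

/-- The `j`-th Taylor coefficient of `f` at `0`. -/
def tcoeff (f : ℂ → ℂ) (j : ℕ) : ℂ := iteratedDeriv j f 0 / (j.factorial : ℂ)

/-- An abstract model of the weighted Bergman space `A_α²`: a complex Hilbert space `H`
whose elements are (identified with) the analytic functions on the unit disk with
square-summable weighted Taylor coefficients, with the weighted `ℓ²` inner product. -/
structure BergmanModel (α : ℝ) (H : Type) [NormedAddCommGroup H]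
    [InnerProductSpace ℂ H] where
  emb : H →ₗ[ℂ] (ℂ → ℂ)
  analyticOn : ∀ f : H, AnalyticOnNhd ℂ (emb f) unitDisk
  summable_norm : ∀ f : H, Summable (fun j => ‖tcoeff (emb f) j‖ ^ 2 * wb2 α j)
  inj : ∀ f g : H, Set.EqOn (emb f) (emb g) unitDisk → f = g
  exists_rep : ∀ F : ℂ → ℂ, AnalyticOnNhd ℂ F unitDisk →
      Summable (fun j => ‖tcoeff F j‖ ^ 2 * wb2 α j) →
      ∃ f : H, Set.EqOn (emb f) F unitDisk
  inner_eq : ∀ f g : H,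
      (@inner ℂ H _ f g) =
        ∑' j : ℕ, (starRingEnd ℂ) (tcoeff (emb f) j) * tcoeff (emb g) j * (wb2 α j : ℂ)

/-- The derivative-evaluation kernel `K_w^{(m)}(z) = m!·z^m / (β(m)²·(1-conj(w)·z)^(m+α+2))`. -/
def kern (α : ℝ) (m : ℕ) (w z : ℂ) : ℂ :=
  (m.factorial : ℂ) * z ^ m /
    ((wb2 α m : ℂ) * (1 - (starRingEnd ℂ) w * z) ^ ((m : ℂ) + (α : ℂ) + 2))

/-- Points `1 - w z` have positive real part. -/
lemma aux_re_pos {w z : ℂ} (hw : w ∈ unitDisk) (hz : z ∈ unitDisk) : 0 < (1 - w * z).re := by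
  have hw' : ‖w‖ < 1 := by simpa [unitDisk] using hw
  have hz' : ‖z‖ < 1 := by simpa [unitDisk] using hz
  have h1 : ‖w * z‖ < 1 := by
    rw [norm_mul]
    nlinarith [norm_nonneg w, norm_nonneg z]
  have h2 := Complex.re_le_norm (w * z)
  simp only [Complex.sub_re, Complex.one_re]
  linarith

lemma aux_slit {w z : ℂ} (hw : w ∈ unitDisk) (hz : z ∈ unitDisk) : 1 - w * z ∈ slitPlane :=
  Or.inl (aux_re_pos hw hz)

lemma aux_ne {w z : ℂ} (hw : w ∈ unitDisk) (hz : z ∈ unitDisk) : 1 - w * z ≠ 0 :=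
  slitPlane_ne_zero (aux_slit hw hz)

lemma aux_open : IsOpen unitDisk := Metric.isOpen_ball

lemma aux_zero : (0 : ℂ) ∈ unitDisk := by simp [unitDisk]

lemma aux_conj {w : ℂ} (hw : w ∈ unitDisk) : (starRingEnd ℂ) w ∈ unitDisk := by
  simpa [unitDisk] using hw

lemma aux_mul_cpow {x y : ℂ} (hx : 0 < x.re) (hy : 0 < y.re) (s : ℂ) :
    (x * y) ^ s = x ^ s * y ^ s := by
  have hx0 : x ≠ 0 := by rintro rfl; simp at hx
  have hy0 : y ≠ 0 := by rintro rfl; simp at hy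
  have h1 := Complex.abs_arg_lt_pi_div_two_iff.2 (Or.inl hx)
  have h2 := Complex.abs_arg_lt_pi_div_two_iff.2 (Or.inl hy)
  rw [abs_lt] at h1 h2
  rw [cpow_def_of_ne_zero (mul_ne_zero hx0 hy0), cpow_def_of_ne_zero hx0,
    cpow_def_of_ne_zero hy0, Complex.log_mul hx0 hy0 ⟨by linarith, by linarith⟩, ← Complex.exp_add]
  ring_nf

/-- `Γ(j+α+2)/Γ(α+2)`. -/
def aux_poch (α : ℝ) (j : ℕ) : ℝ := Real.Gamma ((j : ℝ) + α + 2) / Real.Gamma (α + 2)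

lemma aux_poch_pos {α : ℝ} (hα : -1 < α) (j : ℕ) : 0 < aux_poch α j := by
  have hj : (0 : ℝ) ≤ j := j.cast_nonneg
  exact div_pos (Real.Gamma_pos_of_pos (by linarith)) (Real.Gamma_pos_of_pos (by linarith))

lemma aux_poch_zero {α : ℝ} (hα : -1 < α) : aux_poch α 0 = 1 := by
  have := (Real.Gamma_pos_of_pos (show 0 < α + 2 by linarith)).ne'
  simp [aux_poch, this]

lemma aux_poch_succ {α : ℝ} (hα : -1 < α) (j : ℕ) :
    aux_poch α (j + 1) = aux_poch α j * (j + α + 2) := by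
  have hj : (0 : ℝ) ≤ j := j.cast_nonneg
  have := Real.Gamma_add_one (s := (j : ℝ) + α + 2) (by linarith)
  unfold aux_poch
  rw [show ((j + 1 : ℕ) : ℝ) + α + 2 = (j + α + 2) + 1 by push_cast; ring, this]
  ring

lemma aux_wb2 {α : ℝ} (_hα : -1 < α) (j : ℕ) : wb2 α j = j.factorial / aux_poch α j := by
  unfold wb2 aux_poch
  rw [div_div_eq_mul_div]

lemma aux_wb2_pos {α : ℝ} (hα : -1 < α) (j : ℕ) : 0 < wb2 α j := by
  rw [aux_wb2 hα]
  exact div_pos (by exact_mod_cast j.factorial_pos) (aux_poch_pos hα j)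

/-- The bilinear reproducing kernel. -/
def aux_k (α : ℝ) (w z : ℂ) : ℂ := (1 - w * z) ^ (-((α : ℂ) + 2))

lemma aux_hasDeriv {w z : ℂ} (hw : w ∈ unitDisk) (hz : z ∈ unitDisk) (s : ℂ) :
    HasDerivAt (fun z => (1 - w * z) ^ s) (s * (1 - w * z) ^ (s - 1) * (-w)) z := by
  have h1 : HasDerivAt (fun z : ℂ => 1 - w * z) (-w) z := by
    simpa using ((hasDerivAt_id z).const_mul w).const_sub 1
  exact h1.cpow_const (aux_slit hw hz)

lemma aux_iter {α : ℝ} (hα : -1 < α) {w : ℂ} (hw : w ∈ unitDisk) (j : ℕ) :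
    ∀ z ∈ unitDisk, iteratedDeriv j (aux_k α w) z =
      (aux_poch α j : ℂ) * w ^ j * (1 - w * z) ^ (-((j : ℂ) + (α : ℂ) + 2)) := by
  induction j with
  | zero => intro z hz; simp [aux_poch_zero hα, aux_k]
  | succ j ih =>
    intro z hz
    rw [iteratedDeriv_succ]
    have h1 : iteratedDeriv j (aux_k α w) =ᶠ[nhds z] fun z =>
        (aux_poch α j : ℂ) * w ^ j * (1 - w * z) ^ (-((j : ℂ) + (α : ℂ) + 2)) :=
      Filter.eventually_of_mem (aux_open.mem_nhds hz) ih
    rw [h1.deriv_eq, ((aux_hasDeriv hw hz _).const_mul _).deriv, aux_poch_succ hα]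
    push_cast
    rw [show -((j : ℂ) + (α : ℂ) + 2) - 1 = -((j : ℂ) + 1 + (α : ℂ) + 2) by ring]
    ring

lemma aux_k_diff (α : ℝ) {w : ℂ} (hw : w ∈ unitDisk) : DifferentiableOn ℂ (aux_k α w) unitDisk :=
  fun _ hz => (aux_hasDeriv hw hz _).differentiableAt.differentiableWithinAt

lemma aux_k_an (α : ℝ) {w : ℂ} (hw : w ∈ unitDisk) : AnalyticOnNhd ℂ (aux_k α w) unitDisk :=
  (aux_k_diff α hw).analyticOnNhd aux_open

lemma aux_tcoeff_congr {f g : ℂ → ℂ} (h : Set.EqOn f g unitDisk) (j : ℕ) :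
    tcoeff f j = tcoeff g j := by
  unfold tcoeff
  have h1 : f =ᶠ[nhds 0] g := Filter.eventually_of_mem (aux_open.mem_nhds aux_zero) h
  rw [h1.iteratedDeriv_eq j]

lemma aux_tcoeff_k {α : ℝ} (hα : -1 < α) {w : ℂ} (hw : w ∈ unitDisk) (j : ℕ) :
    tcoeff (aux_k α w) j = w ^ j / (wb2 α j : ℂ) := by
  have hp : (aux_poch α j : ℂ) ≠ 0 := by exact_mod_cast (aux_poch_pos hα j).ne'
  have hf : (j.factorial : ℂ) ≠ 0 := by exact_mod_cast j.factorial_ne_zero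
  unfold tcoeff
  rw [aux_iter hα hw j 0 aux_zero, aux_wb2 hα]
  push_cast
  simp
  field_simp

lemma aux_taylor {f : ℂ → ℂ} (hf : AnalyticOnNhd ℂ f unitDisk) {z : ℂ} (hz : z ∈ unitDisk) :
    HasSum (fun j => tcoeff f j * z ^ j) (f z) := by
  have := Complex.hasSum_taylorSeries_on_ball (c := 0) (r := 1) (f := f)
    hf.differentiableOn hz
  refine this.congr_fun ?_ |> id
  intro j
  simp [tcoeff]
  ring

lemma aux_summable_k {α : ℝ} (hα : -1 < α) {w : ℂ} (hw : w ∈ unitDisk) :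
    Summable (fun j => ‖tcoeff (aux_k α w) j‖ ^ 2 * wb2 α j) := by
  have hr : ((‖w‖ : ℝ) : ℂ) ∈ unitDisk := by simpa [unitDisk] using hw
  have := (aux_taylor (aux_k_an α hr) hr).summable.norm
  refine this.congr ?_
  intro j
  have hb := aux_wb2_pos hα j
  rw [aux_tcoeff_k hα hr, aux_tcoeff_k hα hw]
  simp only [norm_mul, norm_div, norm_pow, Complex.norm_real, norm_norm, Real.norm_of_nonneg hb.le]
  field_simp

section model
variable {α : ℝ} {H : Type} [NormedAddCommGroup H] [InnerProductSpace ℂ H]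

lemma aux_exists (hα : -1 < α) (M : BergmanModel α H) {w : ℂ} (hw : w ∈ unitDisk) :
    ∃ k : H, Set.EqOn (M.emb k) (aux_k α w) unitDisk ∧
      ∀ f : H, @inner ℂ H _ k f = M.emb f ((starRingEnd ℂ) w) := by
  obtain ⟨k, hk⟩ := M.exists_rep (aux_k α w) (aux_k_an α hw) (aux_summable_k hα hw)
  refine ⟨k, hk, fun f => ?_⟩
  rw [M.inner_eq, ← (aux_taylor (M.analyticOn f) (aux_conj hw)).tsum_eq]
  congr 1
  ext j
  have hb : (wb2 α j : ℂ) ≠ 0 := by exact_mod_cast (aux_wb2_pos hα j).ne'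
  rw [aux_tcoeff_congr hk, aux_tcoeff_k hα hw]
  simp
  field_simp

lemma aux_iter_conj (f : ℂ → ℂ) (j : ℕ) : ∀ z,
    iteratedDeriv j (fun z => (starRingEnd ℂ) (f ((starRingEnd ℂ) z))) z =
      (starRingEnd ℂ) (iteratedDeriv j f ((starRingEnd ℂ) z)) := by
  induction j with
  | zero => intro z; simp
  | succ j ih =>
    intro z
    rw [iteratedDeriv_succ, iteratedDeriv_succ, funext ih]
    exact congrFun (deriv_conj_conj (f := iteratedDeriv j f)) z

lemma aux_J_inner (M : BergmanModel α H) (Jm : H → H)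
    (hJm : ∀ f : H, ∀ z ∈ unitDisk,
      M.emb (Jm f) z = (starRingEnd ℂ) (M.emb f ((starRingEnd ℂ) z))) (f g : H) :
    @inner ℂ H _ (Jm f) g = @inner ℂ H _ (Jm g) f := by
  have key : ∀ (f : H) j, tcoeff (M.emb (Jm f)) j = (starRingEnd ℂ) (tcoeff (M.emb f) j) := by
    intro f j
    rw [aux_tcoeff_congr (hJm f)]
    simp [tcoeff, aux_iter_conj]
  rw [M.inner_eq, M.inner_eq]
  simp only [key, Complex.conj_conj]
  congr 1
  ext j
  ring

/-- Symmetry is equivalent to a kernel identity. -/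
lemma aux_symm [CompleteSpace H] (hα : -1 < α) (M : BergmanModel α H) (n : ℕ) (ψ φ : ℂ → ℂ)
    (hφm : ∀ z ∈ unitDisk, φ z ∈ unitDisk)
    (T : H →L[ℂ] H)
    (hT : ∀ f : H, ∀ z ∈ unitDisk,
      M.emb (T f) z = ψ z * iteratedDeriv n (M.emb f) (φ z))
    (Jm : H → H)
    (hJm : ∀ f : H, ∀ z ∈ unitDisk,
      M.emb (Jm f) z = (starRingEnd ℂ) (M.emb f ((starRingEnd ℂ) z))) :
    (∀ f : H, Jm (ContinuousLinearMap.adjoint T (Jm f)) = T f) ↔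
      ∀ z ∈ unitDisk, ∀ w ∈ unitDisk,
        ψ z * (w ^ n * (1 - w * φ z) ^ (-((n : ℂ) + (α : ℂ) + 2))) =
        ψ w * (z ^ n * (1 - z * φ w) ^ (-((n : ℂ) + (α : ℂ) + 2))) := by
  choose! k hk hkr using fun w (hw : w ∈ unitDisk) => aux_exists hα M hw
  have hTk : ∀ z ∈ unitDisk, ∀ w ∈ unitDisk, M.emb (T (k w)) z =
      aux_poch α n * (ψ z * (w ^ n * (1 - w * φ z) ^ (-((n : ℂ) + (α : ℂ) + 2)))) := by
    intro z hz w hw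
    have h1 : M.emb (k w) =ᶠ[nhds (φ z)] aux_k α w :=
      Filter.eventually_of_mem (aux_open.mem_nhds (hφm z hz)) (hk w hw)
    rw [hT _ _ hz, h1.iteratedDeriv_eq, aux_iter hα hw n _ (hφm z hz)]
    ring
  have hp : (aux_poch α n : ℂ) ≠ 0 := by exact_mod_cast (aux_poch_pos hα n).ne'
  have hconv : (∀ z ∈ unitDisk, ∀ w ∈ unitDisk,
        ψ z * (w ^ n * (1 - w * φ z) ^ (-((n : ℂ) + (α : ℂ) + 2))) =
        ψ w * (z ^ n * (1 - z * φ w) ^ (-((n : ℂ) + (α : ℂ) + 2)))) ↔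
      ∀ z ∈ unitDisk, ∀ w ∈ unitDisk, M.emb (T (k w)) z = M.emb (T (k z)) w := by
    constructor
    · intro h z hz w hw
      rw [hTk z hz w hw, hTk w hw z hz, h z hz w hw]
    · intro h z hz w hw
      have := h z hz w hw
      rw [hTk z hz w hw, hTk w hw z hz] at this
      exact mul_left_cancel₀ hp this
  rw [hconv]
  have hev : ∀ (f : H), ∀ z ∈ unitDisk, M.emb f z = @inner ℂ H _ (k ((starRingEnd ℂ) z)) f := by
    intro f z hz
    rw [hkr _ (aux_conj hz), Complex.conj_conj]
  constructor
  · intro h z hz w hw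
    have hJk : Jm (k w) = k ((starRingEnd ℂ) w) := by
      apply M.inj
      intro u hu
      rw [hJm _ _ hu, hk _ hw (aux_conj hu), hk _ (aux_conj hw) hu]
      unfold aux_k
      have h2 := slitPlane_arg_ne_pi (aux_slit hw (aux_conj hu))
      have h3 := Complex.conj_cpow (1 - w * (starRingEnd ℂ) u) (-((α : ℂ) + 2)) h2
      simp only [map_sub, map_one, map_mul, Complex.conj_conj, map_neg, map_add,
        Complex.conj_ofReal, Complex.conj_ofNat] at h3
      rw [h3]
    rw [← h, hJm _ _ hz, hev _ _ (aux_conj hz), Complex.conj_conj, hJk,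
      ContinuousLinearMap.adjoint_inner_right, inner_conj_symm, ← hev _ _ hw]
  · intro h f
    apply M.inj
    intro w hw
    have key : ContinuousLinearMap.adjoint T (k ((starRingEnd ℂ) w)) = Jm (T (k w)) := by
      apply M.inj
      intro z hz
      rw [hJm _ _ hz, hev _ _ hz, ContinuousLinearMap.adjoint_inner_right,
        ← inner_conj_symm, ← hev _ _ hw, h _ hw _ (aux_conj hz)]
    rw [hJm _ _ hw, hev _ _ (aux_conj hw), Complex.conj_conj,
      ContinuousLinearMap.adjoint_inner_right, inner_conj_symm, aux_J_inner M Jm hJm,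
      ← key, ContinuousLinearMap.adjoint_inner_left, ← hev _ _ hw]

end model
lemma aux_leib (n : ℕ) (g : ℂ → ℂ) (hg : AnalyticAt ℂ g 0) :
    iteratedDeriv n (fun z => z ^ n * g z) 0 = n.factorial * g 0 := by
  rw [iteratedDeriv_fun_mul (by fun_prop) hg.contDiffAt]
  rw [Finset.sum_eq_single n]
  · simp [Nat.descFactorial_self]
  · intro i hi hin
    have h1 : i < n + 1 := Finset.mem_range.1 hi
    have h2 : ¬ n - i = 0 := by omega
    simp [h2]
  · simp

lemma aux_forward (n : ℕ) (ψ φ : ℂ → ℂ) (hφa : AnalyticOnNhd ℂ φ unitDisk)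
    (hφm : ∀ z ∈ unitDisk, φ z ∈ unitDisk)
    (hψ0 : ∃ z ∈ unitDisk, ψ z ≠ 0)
    (hφnc : ∃ z ∈ unitDisk, ∃ w ∈ unitDisk, φ z ≠ φ w) (s : ℂ) (hs : s ≠ 0)
    (h : ∀ z ∈ unitDisk, ∀ w ∈ unitDisk,
        ψ z * (w ^ n * (1 - w * φ z) ^ (-s)) = ψ w * (z ^ n * (1 - z * φ w) ^ (-s))) :
    (iteratedDeriv n ψ 0 ≠ 0 ∧ deriv φ 0 ≠ 0 ∧
        (∀ z ∈ unitDisk, ψ z = iteratedDeriv n ψ 0 * z ^ n /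
          ((n.factorial : ℂ) * (1 - φ 0 * z) ^ s)) ∧
        (∀ z ∈ unitDisk, φ z = φ 0 + deriv φ 0 * z / (1 - φ 0 * z))) := by
  have h0 := aux_zero
  have hc := hφm 0 h0
  have hne : ∀ {x y : ℂ}, x ∈ unitDisk → y ∈ unitDisk → (1 - x * y) ^ (-s) ≠ 0 := fun hx hy =>
    (cpow_ne_zero_iff_of_exponent_ne_zero (neg_ne_zero.2 hs)).2 (aux_ne hx hy)
  have hne' : ∀ {x y : ℂ}, x ∈ unitDisk → y ∈ unitDisk → (1 - x * y) ^ s ≠ 0 := fun hx hy =>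
    (cpow_ne_zero_iff_of_exponent_ne_zero hs).2 (aux_ne hx hy)
  obtain ⟨u, hu, hψu⟩ := hψ0
  -- the factorization `ψ = z^n g`
  set g : ℂ → ℂ := fun w =>
    ψ u / u ^ n * ((1 - w * φ u) ^ (-s) * (1 - u * φ w) ^ s) with hgdef
  have hun : u ^ n ≠ 0 := by
    intro hun
    have hhalf : (1 / 2 : ℂ) ∈ unitDisk := by simp [unitDisk]; norm_num
    have h2 := h u hu (1 / 2) hhalf
    rw [hun] at h2
    have h3 := hne hhalf (hφm u hu)
    simp at h2 h3
    tauto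
  have hg : ∀ w, g w = ψ u / u ^ n * ((1 - w * φ u) ^ (-s) * (1 - u * φ w) ^ s) := by
    intro w
    rw [hgdef]
  have hgan : ∀ w ∈ unitDisk, AnalyticAt ℂ g w := by
    intro w hw
    rw [funext hg]
    have a1 : AnalyticAt ℂ (fun w => (1 - w * φ u) ^ (-s)) w :=
      AnalyticAt.cpow (by fun_prop) (by fun_prop) (aux_slit hw (hφm u hu))
    have a2 : AnalyticAt ℂ (fun w => (1 - u * φ w) ^ s) w :=
      AnalyticAt.cpow (analyticAt_const.sub (analyticAt_const.mul (hφa w hw))) (by fun_prop)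
        (aux_slit hu (hφm w hw))
    exact analyticAt_const.mul (a1.mul a2)
  have hg0 : ∀ w ∈ unitDisk, g w ≠ 0 := by
    intro w hw
    rw [hg]
    exact mul_ne_zero (div_ne_zero hψu hun)
      (mul_ne_zero (hne hw (hφm u hu)) (hne' hu (hφm w hw)))
  have hψg : ∀ w ∈ unitDisk, ψ w = w ^ n * g w := by
    intro w hw
    have h2 := h u hu w hw
    have h3 := hne' hu (hφm w hw)
    rw [cpow_neg (1 - u * φ w)] at h2
    rw [hg]
    field_simp at h2 ⊢
    linear_combination -h2
  have hφc : ∀ z, AnalyticAt ℂ (fun w => (1 - w * φ z) ^ (-s)) 0 := by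
    intro z
    exact AnalyticAt.cpow (by fun_prop) (by fun_prop) (by simp)
  have hφd : ∀ z ∈ unitDisk, AnalyticAt ℂ (fun w => (1 - z * φ w) ^ (-s)) 0 := by
    intro z hz
    exact AnalyticAt.cpow (analyticAt_const.sub (analyticAt_const.mul (hφa 0 h0))) (by fun_prop)
        (aux_slit hz hc)
  have hev : ∀ z ∈ unitDisk, z ≠ 0 → (fun w => g z * (1 - w * φ z) ^ (-s)) =ᶠ[nhds 0]
      fun w => g w * (1 - z * φ w) ^ (-s) := by
    intro z hz hz0
    rw [← ContinuousAt.eventuallyEq_nhds_iff_eventuallyEq_nhdsNE]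
    · have h1 : ∀ᶠ w in nhdsWithin (0 : ℂ) {0}ᶜ, w ∈ unitDisk :=
        nhdsWithin_le_nhds (aux_open.mem_nhds h0)
      filter_upwards [h1, self_mem_nhdsWithin] with w hw hw0
      have h2 := h z hz w hw
      rw [hψg z hz, hψg w hw] at h2
      have hzw : z ^ n * w ^ n ≠ 0 := mul_ne_zero (pow_ne_zero _ hz0) (pow_ne_zero _ hw0)
      apply mul_left_cancel₀ hzw
      linear_combination h2
    · exact (analyticAt_const.mul (hφc z)).continuousAt
    · exact ((hgan 0 h0).mul (hφd z hz)).continuousAt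
  have hgz : ∀ z ∈ unitDisk, g z = g 0 * (1 - φ 0 * z) ^ (-s) := by
    intro z hz
    by_cases hz0 : z = 0
    · simp [hz0]
    · have := (hev z hz hz0).self_of_nhds
      simp only [zero_mul, sub_zero, one_cpow, mul_one] at this
      rw [this, mul_comm z]
  have hiter : iteratedDeriv n ψ 0 = n.factorial * g 0 := by
    have h1 : ψ =ᶠ[nhds 0] fun w => w ^ n * g w :=
      Filter.eventually_of_mem (aux_open.mem_nhds h0) hψg
    rw [h1.iteratedDeriv_eq, aux_leib n g (hgan 0 h0)]
  have hf : (n.factorial : ℂ) ≠ 0 := by exact_mod_cast n.factorial_ne_zero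
  have hφeq : ∀ z ∈ unitDisk, φ z = φ 0 + deriv φ 0 * z / (1 - φ 0 * z) := by
    intro z hz
    by_cases hz0 : z = 0
    · simp [hz0]
    have hE : (fun w => g z * (1 - w * φ z) ^ (-s)) =ᶠ[nhds 0]
        fun w => g 0 * ((1 - φ 0 * w) ^ (-s) * (1 - z * φ w) ^ (-s)) := by
      filter_upwards [hev z hz hz0, aux_open.mem_nhds h0] with w hw hwd
      rw [hw, hgz w hwd, mul_assoc]
    have d1 : HasDerivAt (fun w => g z * (1 - w * φ z) ^ (-s)) (g z * (s * φ z)) 0 := by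
      have := (aux_hasDeriv (hφm z hz) h0 (-s)).const_mul (g z)
      simp only [mul_comm (φ z)] at this
      convert! this using 1
      simp
    have d2 : HasDerivAt (fun w => (1 - φ 0 * w) ^ (-s)) (s * φ 0) 0 := by
      have := (aux_hasDeriv hc h0 (-s))
      convert! this using 1
      simp
    have d3 : HasDerivAt (fun w => (1 - z * φ w) ^ (-s))
        ((-s) * (1 - z * φ 0) ^ (-s - 1) * (-(z * deriv φ 0))) 0 := by
      have h1 : HasDerivAt (fun w : ℂ => 1 - z * φ w) (-(z * deriv φ 0)) 0 :=
        ((hφa 0 h0).differentiableAt.hasDerivAt.const_mul z).const_sub 1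
      exact h1.cpow_const (aux_slit hz hc)
    have d4 := (d2.mul d3).const_mul (g 0)
    have e := (d1.congr_of_eventuallyEq hE.symm).unique d4
    have hn1 := aux_ne hz hc
    have hn2 := hne hz hc
    have hn3 := hg0 0 h0
    rw [hgz z hz, cpow_sub _ _ hn1, cpow_one] at e
    simp only [mul_comm (φ 0) z, mul_zero, sub_zero, one_cpow] at e ⊢
    generalize (1 - z * φ 0) ^ (-s) = P at *
    have hk : g 0 * P * s ≠ 0 := by
      refine mul_ne_zero (mul_ne_zero hn3 hn2) hs
    apply mul_left_cancel₀ hk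
    field_simp at e ⊢
    linear_combination e
  refine ⟨?_, ?_, ?_, hφeq⟩
  · rw [hiter]
    exact mul_ne_zero hf (hg0 0 h0)
  · intro hb
    obtain ⟨z, hz, w, hw, hzw⟩ := hφnc
    apply hzw
    rw [hφeq z hz, hφeq w hw, hb]
    simp
  · intro z hz
    rw [hψg z hz, hgz z hz, hiter, cpow_neg]
    have := hne' hc hz
    field_simp

/-- A bounded operator `D_{ψ,φ,n}` on `A_α²` is `J`-symmetric iff
`ψ(z) = a z^n/(n!(1-cz)^{n+α+2})` and `φ(z) = c + bz/(1-cz)`, where `a = ψ⁽ⁿ⁾(0)` and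
`b = φ'(0)` are both nonzero and `c = φ(0) ∈ 𝔻`. -/
theorem stmt_8 (α : ℝ) (hα : -1 < α) (n : ℕ) (hn : 1 ≤ n)
    (H : Type) [NormedAddCommGroup H] [InnerProductSpace ℂ H] [CompleteSpace H]
    (M : BergmanModel α H)
    (ψ : ℂ → ℂ) (hψa : AnalyticOnNhd ℂ ψ unitDisk)
    (hψ0 : ∃ z ∈ unitDisk, ψ z ≠ 0)
    (φ : ℂ → ℂ) (hφa : AnalyticOnNhd ℂ φ unitDisk)
    (hφm : ∀ z ∈ unitDisk, φ z ∈ unitDisk)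
    (hφnc : ∃ z ∈ unitDisk, ∃ w ∈ unitDisk, φ z ≠ φ w)
    (T : H →L[ℂ] H)
    (hT : ∀ f : H, ∀ z ∈ unitDisk,
      M.emb (T f) z = ψ z * iteratedDeriv n (M.emb f) (φ z))
    (Jm : H → H)
    (hJm : ∀ f : H, ∀ z ∈ unitDisk,
      M.emb (Jm f) z = (starRingEnd ℂ) (M.emb f ((starRingEnd ℂ) z))) :
    (∀ f : H, Jm (ContinuousLinearMap.adjoint T (Jm f)) = T f) ↔
      (iteratedDeriv n ψ 0 ≠ 0 ∧ deriv φ 0 ≠ 0 ∧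
        (∀ z ∈ unitDisk, ψ z = iteratedDeriv n ψ 0 * z ^ n /
          ((n.factorial : ℂ) * (1 - φ 0 * z) ^ ((n : ℂ) + (α : ℂ) + 2))) ∧
        (∀ z ∈ unitDisk, φ z = φ 0 + deriv φ 0 * z / (1 - φ 0 * z))) := by
  have h0 := aux_zero
  have hc := hφm 0 h0
  rw [aux_symm hα M n ψ φ hφm T hT Jm hJm]
  have hs : (n : ℂ) + (α : ℂ) + 2 ≠ 0 := by
    have : (0 : ℝ) < n + α + 2 := by have := n.cast_nonneg (α := ℝ); linarith
    exact_mod_cast this.ne'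
  constructor
  · intro h
    exact aux_forward n ψ φ hφa hφm hψ0 hφnc _ hs h
  · rintro ⟨-, -, h1, h2⟩ z hz w hw
    generalize (n : ℂ) + (α : ℂ) + 2 = s at *
    have e1 := aux_mul_cpow (aux_re_pos hw (hφm z hz)) (aux_re_pos hc hz) s
    have e2 := aux_mul_cpow (aux_re_pos hz (hφm w hw)) (aux_re_pos hc hw) s
    have e3 : (1 - w * φ z) * (1 - φ 0 * z) = (1 - z * φ w) * (1 - φ 0 * w) := by
      have n1 := aux_ne hc hz
      have n2 := aux_ne hc hw
      have p1 : φ z * (1 - φ 0 * z) = φ 0 * (1 - φ 0 * z) + deriv φ 0 * z := by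
        rw [h2 z hz, add_mul, div_mul_cancel₀ _ n1]
      have p2 : φ w * (1 - φ 0 * w) = φ 0 * (1 - φ 0 * w) + deriv φ 0 * w := by
        rw [h2 w hw, add_mul, div_mul_cancel₀ _ n2]
      linear_combination -w * p1 + z * p2
    rw [e3, e2] at e1
    have hne : ∀ {x y : ℂ}, x ∈ unitDisk → y ∈ unitDisk → (1 - x * y) ^ s ≠ 0 := fun hx hy =>
      (cpow_ne_zero_iff_of_exponent_ne_zero hs).2 (aux_ne hx hy)
    have a1 := hne hw (hφm z hz)
    have a2 := hne hz (hφm w hw)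
    have a3 := hne hc hz
    have a4 := hne hc hw
    rw [h1 z hz, h1 w hw, cpow_neg, cpow_neg]
    have hf : (n.factorial : ℂ) ≠ 0 := by exact_mod_cast n.factorial_ne_zero
    field_simp
    linear_combination (iteratedDeriv n ψ 0) * z ^ n * w ^ n * e1
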